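/- Let Ω = ℝ × 𝕋^{n-1} with n ≥ 2. For every f ∈ L¹(Ω) with ∇f ∈ L²(Ω), there is a constant C > 0 independent of f such that ‖f‖_{L²(Ω)} ≤ C ∑_{k=0}^{n-1} ‖∇f‖_{L²(Ω)}^{θ_k} ‖f‖_{L¹(Ω)}^{1-θ_k}, where θ_k = (k+1)/(k+3). -/

import Mathlib

open MeasureTheory

/-!
Write `d = n - 1`, `A = ‖∇f‖₂`, `B = ‖f‖₁`. For a box `V = [0,r) × [0,h)^d` with `h ≤ min r 1`,
the function `f` is compared with its averages over the translates `x + V`: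
`|V| |f(x)| ≤ ∫_V |f(x+v) - f(x)| dv + ∫_V |f(x+v)| dv`.

* By the fundamental theorem of calculus on segments (`enorm_sub_sq_le`) and translation invariance
  of the integral over the cylinder (`lintegral_cell_comp_add`), the map `x ↦ f(x+v) - f(x)` has
  `L²` norm at most `‖v‖ A`.
* As `V` lies in a fundamental domain, `G(x) = ∫_V |f(x+v)| dv` satisfies `G ≤ B` and
  `∫ G = |V| B`, hence `∫ G² ≤ |V| B²`.

Squaring and integrating gives `‖f‖₂² ≤ 2 ((d+1) r)² A² + 2 B² / (r h^d)`
(`lintegral_sq_le_of_scale`). Choosing `h = min r 1` and balancing the two terms in `r`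
(`le_of_forall_scale`) yields the one-dimensional exponent `θ₀ = 1/3` when the optimal scale is
`≥ 1`, and the exponent `θ_d = (d+1)/(d+3)` of dimension `d + 1` when it is `≤ 1`.
The estimates before the last step are made with `ℝ≥0∞`-valued integrals, so that `f ∈ L²` is a
consequence rather than an assumption.
-/

open scoped ENNReal

/-- The universal cover `ℝ × ℝ^d` of the cylinder `ℝ × 𝕋^d`. -/
abbrev Cyl (d : ℕ) : Type := ℝ × EuclideanSpace ℝ (Fin d)

/-- The translate by `w` of the fundamental domain `ℝ × [0,1)^d`. It depends only on the torus
component of `w`. -/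
def cell (d : ℕ) (w : Cyl d) : Set (Cyl d) := {p | ∀ i, p.2 i - w.2 i ∈ Set.Ico (0:ℝ) 1}

/-- The box `[0,r) × [0,h)^d`, over which functions are averaged: `r` is its length along the
axis and `h` its side in the torus directions. -/
def box (d : ℕ) (r h : ℝ) : Set (Cyl d) :=
  {p | p.1 ∈ Set.Ico (0:ℝ) r ∧ ∀ i, p.2 i ∈ Set.Ico (0:ℝ) h}

/-- `volume` on the product is `Measure.prod` only up to unfolding, so the instance is given by hand. -/
instance volume_isAddHaarMeasure (d : ℕ) : (volume : Measure (Cyl d)).IsAddHaarMeasure :=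
  Measure.prod.instIsAddHaarMeasure (volume : Measure ℝ) (volume : Measure (EuclideanSpace ℝ (Fin d)))

/-- The group `{0} × ℤ^d` of periods. -/
def periods (d : ℕ) : AddSubgroup (Cyl d) :=
  AddMonoidHom.range
    { toFun := fun m : Fin d → ℤ => ((0, WithLp.toLp 2 fun i => (m i : ℝ)) : Cyl d)
      map_zero' := by ext <;> simp
      map_add' := fun a b => by ext <;> simp }

instance periods_countable (d : ℕ) : Countable (periods d) :=
  (Set.countable_range _).to_subtype

theorem measurableSet_cell (d : ℕ) (w : Cyl d) : MeasurableSet (cell d w) := by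
  simp only [cell, Set.ofPred_forall]
  exact MeasurableSet.iInter fun i => measurableSet_Ico.preimage (by fun_prop)

theorem isAddFundamentalDomain_cell (d : ℕ) (w : Cyl d) :
    IsAddFundamentalDomain (periods d) (cell d w) volume := by
  refine IsAddFundamentalDomain.mk' (measurableSet_cell d w).nullMeasurableSet fun x => ?_
  refine ⟨⟨(0, WithLp.toLp 2 fun i => ((-⌊x.2 i - w.2 i⌋ : ℤ) : ℝ)),
    ⟨fun i => -⌊x.2 i - w.2 i⌋, rfl⟩⟩, ?_, ?_⟩
  · intro i
    have h1 := Int.floor_le (x.2 i - w.2 i)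
    have h2 := Int.lt_floor_add_one (x.2 i - w.2 i)
    simp [AddSubgroup.vadd_def]
    constructor <;> linarith
  · rintro ⟨_, m, rfl⟩ hm
    have : m = fun i => -⌊x.2 i - w.2 i⌋ := by
      funext i
      have h := hm i
      simp [AddSubgroup.vadd_def] at h
      rw [eq_neg_iff_add_eq_zero, add_comm, ← eq_neg_iff_add_eq_zero, Int.floor_eq_iff]
      push_cast
      constructor <;> linarith
    subst this
    rfl

/-- Translation invariance of the integral over the cylinder: translating by `v` carries one
fundamental domain to another, and a periodic function has the same integral over both. -/
theorem lintegral_cell_comp_add {d : ℕ} {F : Cyl d → ℝ≥0∞}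
    (hF : ∀ (p : Cyl d) (m : Fin d → ℤ), F (p + (0, WithLp.toLp 2 fun i => (m i : ℝ))) = F p)
    (v : Cyl d) : ∫⁻ x in cell d 0, F (x + v) = ∫⁻ x in cell d 0, F x := by
  have h1 : cell d 0 = (· + v) ⁻¹' cell d v := by ext; simp [cell]
  conv_lhs => rw [h1]
  rw [(measurePreserving_add_right volume v).setLIntegral_comp_preimage_emb
    (measurableEmbedding_addRight v)]
  refine (isAddFundamentalDomain_cell d v).setLIntegral_eq (isAddFundamentalDomain_cell d 0) F ?_
  rintro ⟨_, m, rfl⟩ x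
  rw [AddSubgroup.vadd_def, vadd_eq_add, add_comm]
  exact hF x m

/-- Cauchy–Schwarz against the constant function `1`. -/
theorem lintegral_sq_le {α : Type*} [MeasurableSpace α] (μ : Measure α) {g : α → ℝ≥0∞}
    (hg : AEMeasurable g μ) : (∫⁻ a, g a ∂μ) ^ 2 ≤ μ Set.univ * ∫⁻ a, g a ^ 2 ∂μ := by
  have h := ENNReal.lintegral_mul_le_Lp_mul_Lq μ Real.HolderConjugate.two_two
    (f := fun _ => 1) (g := g) aemeasurable_const hg
  simp only [Pi.mul_apply, one_mul, lintegral_const, ENNReal.rpow_two] at h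
  calc _ ≤ _ := pow_le_pow_left' h 2
    _ = _ := by
      have hs : ∀ a : ℝ≥0∞, (a ^ (1 / 2 : ℝ)) ^ 2 = a := fun a => by
        rw [← ENNReal.rpow_two, ← ENNReal.rpow_mul]; norm_num
      rw [mul_pow, hs, hs]; norm_num

theorem sq_add_le (a b : ℝ≥0∞) : (a + b) ^ 2 ≤ 2 * a ^ 2 + 2 * b ^ 2 := by
  have := ENNReal.rpow_add_le_mul_rpow_add_rpow a b (p := 2) (by norm_num)
  norm_num at this
  rwa [mul_add] at this

/-- The increment of `f` along `v`, bounded by the energy on the segment from `x` to `x + v`.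
Since `f` is only assumed differentiable, the derivative along the segment need not be integrable;
the right-hand side is then infinite. -/
theorem enorm_sub_sq_le {E : Type*} [NormedAddCommGroup E] [NormedSpace ℝ E] [MeasurableSpace E]
    [BorelSpace E] {f : E → ℝ} (hf : Differentiable ℝ f) (x v : E) {K : ℝ}
    (hv : ‖v‖ ≤ K) :
    ‖f (x + v) - f x‖ₑ ^ 2 ≤
      ENNReal.ofReal K ^ 2 * ∫⁻ s in Set.Ioc (0:ℝ) 1, ‖fderiv ℝ f (x + s • v)‖ₑ ^ 2 := by
  set μ := (volume : Measure ℝ).restrict (Set.Ioc 0 1) with hμ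
  have hderiv : ∀ s : ℝ, HasDerivAt (fun s : ℝ => f (x + s • v)) (fderiv ℝ f (x + s • v) v) s := by
    intro s
    have h := (hf (x + s • v)).hasFDerivAt.comp_hasDerivAt s
      (((hasDerivAt_id s).smul_const v).const_add x)
    simpa [Function.comp_def] using h
  have hmeas : Measurable fun s : ℝ => fderiv ℝ f (x + s • v) v := by
    have : (fun s : ℝ => fderiv ℝ f (x + s • v) v) = deriv fun s : ℝ => f (x + s • v) :=
      funext fun s => (hderiv s).deriv.symm
    rw [this]; exact measurable_deriv _
  have hle : ∫⁻ s, ‖fderiv ℝ f (x + s • v) v‖ₑ ^ 2 ∂μ ≤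
      ENNReal.ofReal K ^ 2 * ∫⁻ s, ‖fderiv ℝ f (x + s • v)‖ₑ ^ 2 ∂μ := by
    rw [← lintegral_const_mul' _ _ (by finiteness)]
    refine lintegral_mono fun s => ?_
    rw [← mul_pow, mul_comm]
    refine pow_le_pow_left' ?_ 2
    refine (ContinuousLinearMap.le_opENorm _ _).trans ?_
    gcongr
    rw [← ofReal_norm]
    exact ENNReal.ofReal_le_ofReal hv
  have hCS := lintegral_sq_le μ (g := fun s => ‖fderiv ℝ f (x + s • v) v‖ₑ) hmeas.enorm.aemeasurable
  have hone : μ Set.univ = 1 := by simp [hμ]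
  rw [hone, one_mul] at hCS
  by_cases hint : IntervalIntegrable (fun s : ℝ => fderiv ℝ f (x + s • v) v) volume 0 1
  · have hFTC := intervalIntegral.integral_eq_sub_of_hasDerivAt (fun s _ => hderiv s) hint
    rw [intervalIntegral.integral_of_le zero_le_one] at hFTC
    simp only [one_smul, zero_smul, add_zero] at hFTC
    rw [← hFTC]
    exact (pow_le_pow_left' (enorm_integral_le_lintegral_enorm _) 2).trans (hCS.trans hle)
  · have htop : ∫⁻ s, ‖fderiv ℝ f (x + s • v) v‖ₑ ∂μ = ⊤ := by
      by_contra hne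
      refine hint ((intervalIntegrable_iff_integrableOn_Ioc_of_le zero_le_one).2
        ⟨hmeas.aestronglyMeasurable, ?_⟩)
      exact lt_top_iff_ne_top.2 hne
    rw [htop] at hCS
    refine le_trans le_top ((by simpa using hCS.trans hle : _ = _) ▸ le_rfl)

theorem measurableSet_box (d : ℕ) (r h : ℝ) : MeasurableSet (box d r h) := by
  have : box d r h = Prod.fst ⁻¹' Set.Ico 0 r ∩ ⋂ i, (fun p : Cyl d => p.2 i) ⁻¹' Set.Ico 0 h := by
    ext; simp [box]
  rw [this]
  exact (measurableSet_Ico.preimage measurable_fst).inter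
    (MeasurableSet.iInter fun i => measurableSet_Ico.preimage (by fun_prop))

theorem volume_box (d : ℕ) {r h : ℝ} (hr : 0 ≤ r) (hh : 0 ≤ h) :
    volume (box d r h) = ENNReal.ofReal (r * h ^ d) := by
  have h1 : box d r h = Set.Ico 0 r ×ˢ
      ((WithLp.ofLp : EuclideanSpace ℝ (Fin d) → Fin d → ℝ) ⁻¹'
        Set.univ.pi fun _ => Set.Ico 0 h) := by
    ext; simp [box]
  rw [h1, Measure.volume_eq_prod, Measure.prod_prod,
    (PiLp.volume_preserving_ofLp (Fin d)).measure_preimage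
      (MeasurableSet.univ_pi fun _ => measurableSet_Ico).nullMeasurableSet, Real.volume_pi_Ico]
  simp only [Real.volume_Ico, sub_zero, Finset.prod_const, Finset.card_univ, Fintype.card_fin]
  rw [ENNReal.ofReal_mul hr, ENNReal.ofReal_pow hh]

theorem norm_le_of_mem_box {d : ℕ} {r h : ℝ} (hhr : h ≤ r) {v : Cyl d} (hv : v ∈ box d r h) :
    ‖v‖ ≤ (d + 1) * r := by
  have hr : 0 ≤ r := hv.1.1.trans hv.1.2.le
  refine norm_prod_le_iff.2 ⟨?_, ?_⟩
  · rw [Real.norm_of_nonneg hv.1.1]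
    nlinarith [hv.1.2, mul_nonneg (Nat.cast_nonneg (α := ℝ) d) hr]
  · rw [EuclideanSpace.norm_eq]
    have hs : ∑ i, ‖v.2 i‖ ^ 2 ≤ d * r ^ 2 := by
      calc _ ≤ ∑ i : Fin d, r ^ 2 := by
            refine Finset.sum_le_sum fun i _ => ?_
            rw [Real.norm_of_nonneg (hv.2 i).1]
            exact pow_le_pow_left₀ (hv.2 i).1 ((hv.2 i).2.le.trans hhr) 2
        _ = _ := by simp
    refine (Real.sqrt_le_sqrt hs).trans (Real.sqrt_le_iff.2 ⟨by positivity, ?_⟩)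
    have : (d : ℝ) ≤ (d + 1) ^ 2 := by nlinarith [Nat.cast_nonneg (α := ℝ) d]
    rw [mul_pow]
    gcongr

/-- The one-scale estimate `‖f‖₂² ≤ 2 ((d+1) r)² ‖∇f‖₂² + 2 ‖f‖₁² / |V|` for the box
`V = [0,r) × [0,h)^d`, where `(d+1) r` bounds the length of the vectors of `V`. The condition
`h ≤ 1` keeps `V` inside one fundamental domain, so that `∫_V |f(x+v)| dv ≤ ‖f‖₁`. -/
theorem lintegral_sq_le_of_scale {d : ℕ} {f : Cyl d → ℝ} (hf : Differentiable ℝ f)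
    (hper : ∀ (p : Cyl d) (m : Fin d → ℤ), f (p + (0, WithLp.toLp 2 fun i => (m i : ℝ))) = f p)
    {r h : ℝ} (hh : 0 < h) (hhr : h ≤ r) (hh1 : h ≤ 1) :
    ∫⁻ x in cell d 0, ‖f x‖ₑ ^ 2 ≤
      2 * ENNReal.ofReal ((d + 1) * r) ^ 2 * (∫⁻ x in cell d 0, ‖fderiv ℝ f x‖ₑ ^ 2) +
      2 * (∫⁻ x in cell d 0, ‖f x‖ₑ) ^ 2 / ENNReal.ofReal (r * h ^ d) := by
  have hr : 0 < r := hh.trans_le hhr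
  have hfm : Measurable f := hf.continuous.measurable
  have hDm : Measurable fun x => ‖fderiv ℝ f x‖ₑ := (measurable_fderiv ℝ f).enorm
  have hDper : ∀ (p : Cyl d) (m : Fin d → ℤ),
      fderiv ℝ f (p + (0, WithLp.toLp 2 fun i => (m i : ℝ))) = fderiv ℝ f p := by
    intro p m
    rw [← fderiv_comp_add_right]
    congr 1
    exact funext fun q => hper q m
  set V := box d r h with hV
  set D := cell d 0 with hD
  set B := ∫⁻ x in D, ‖f x‖ₑ with hB
  set A := ∫⁻ x in D, ‖fderiv ℝ f x‖ₑ ^ 2 with hA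
  set c := ENNReal.ofReal (r * h ^ d) with hc
  set K := ENNReal.ofReal ((d + 1) * r) with hKdef
  have hvol : volume V = c := volume_box d hr.le hh.le
  have hc0 : c ≠ 0 := by rw [hc]; simp; positivity
  have hct : c ≠ ⊤ := ENNReal.ofReal_ne_top
  have hVD : V ⊆ D := fun v hv i => by
    have := hv.2 i
    simp only [Prod.snd_zero, PiLp.zero_apply, sub_zero]
    exact ⟨this.1, this.2.trans_le hh1⟩
  have hVm : MeasurableSet V := measurableSet_box d r h
  have hBtrans : ∀ v : Cyl d, ∫⁻ x in D, ‖f (x + v)‖ₑ = B :=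
    lintegral_cell_comp_add (F := fun x => ‖f x‖ₑ) fun p m => by simp only [hper]
  -- the mean square oscillation over the box is controlled by the energy
  have hosc : ∫⁻ x in D, ∫⁻ v in V, ‖f (x + v) - f x‖ₑ ^ 2 ≤ c * (K ^ 2 * A) := by
    rw [lintegral_lintegral_swap (by fun_prop), mul_comm, ← hvol, ← setLIntegral_const]
    refine setLIntegral_mono' hVm fun v hv => ?_
    calc ∫⁻ x in D, ‖f (x + v) - f x‖ₑ ^ 2
        ≤ ∫⁻ x in D, K ^ 2 * ∫⁻ s in Set.Ioc (0:ℝ) 1, ‖fderiv ℝ f (x + s • v)‖ₑ ^ 2 :=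
          lintegral_mono fun x => enorm_sub_sq_le hf x v (norm_le_of_mem_box hhr hv)
      _ = K ^ 2 * ∫⁻ s in Set.Ioc (0:ℝ) 1, ∫⁻ x in D, ‖fderiv ℝ f (x + s • v)‖ₑ ^ 2 := by
          rw [lintegral_const_mul' _ _ (by finiteness), lintegral_lintegral_swap]
          exact ((hDm.comp (by fun_prop : Measurable fun p : Cyl d × ℝ =>
            p.1 + p.2 • v)).pow_const 2).aemeasurable
      _ = K ^ 2 * A := by
          congr 1
          have : ∀ s : ℝ, ∫⁻ x in D, ‖fderiv ℝ f (x + s • v)‖ₑ ^ 2 = A := fun s =>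
            lintegral_cell_comp_add (F := fun x => ‖fderiv ℝ f x‖ₑ ^ 2)
              (fun p m => by simp only [hDper]) (s • v)
          simp [this]
  -- the function `x ↦ ∫_V |f(x+v)| dv` has integral `|V| ‖f‖₁` and is bounded by `‖f‖₁`
  have hsum : ∫⁻ x in D, ∫⁻ v in V, ‖f (x + v)‖ₑ = c * B := by
    rw [lintegral_lintegral_swap (by fun_prop)]
    simp [hBtrans, hvol, mul_comm]
  have hGB : ∀ x, ∫⁻ v in V, ‖f (x + v)‖ₑ ≤ B := fun x => by
    refine (lintegral_mono_set hVD).trans_eq ?_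
    simpa only [add_comm x] using hBtrans x
  have hpt : ∀ x, c ^ 2 * ‖f x‖ₑ ^ 2 ≤ 2 * (c * ∫⁻ v in V, ‖f (x + v) - f x‖ₑ ^ 2) +
      2 * (B * ∫⁻ v in V, ‖f (x + v)‖ₑ) := fun x => by
    have h1 : c * ‖f x‖ₑ ≤ (∫⁻ v in V, ‖f (x + v) - f x‖ₑ) + ∫⁻ v in V, ‖f (x + v)‖ₑ := by
      rw [← lintegral_add_left (by fun_prop), mul_comm, ← hvol, ← setLIntegral_const]
      refine lintegral_mono fun v => ?_
      calc ‖f x‖ₑ = ‖f (x + v) - (f (x + v) - f x)‖ₑ := by rw [sub_sub_cancel]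
        _ ≤ _ := enorm_sub_le.trans_eq (add_comm _ _)
    have h2 := lintegral_sq_le (volume.restrict V) (g := fun v => ‖f (x + v) - f x‖ₑ) (by fun_prop)
    rw [Measure.restrict_apply_univ, hvol] at h2
    rw [← mul_pow]
    refine (pow_le_pow_left' h1 2).trans ((sq_add_le _ _).trans ?_)
    gcongr
    rw [sq]
    gcongr
    exact hGB x
  have hmain : c ^ 2 * ∫⁻ x in D, ‖f x‖ₑ ^ 2 ≤ 2 * (c * (c * (K ^ 2 * A))) + 2 * (B * (c * B)) := by
    rw [← lintegral_const_mul' _ _ (by finiteness)]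
    refine (lintegral_mono hpt).trans ?_
    rw [lintegral_add_left (by
        refine Measurable.const_mul (Measurable.const_mul ?_ _) _
        exact Measurable.lintegral_prod_right' (f := fun p : Cyl d × Cyl d =>
          ‖f (p.1 + p.2) - f p.1‖ₑ ^ 2) (by fun_prop)),
      lintegral_const_mul' _ _ (by finiteness), lintegral_const_mul' _ _ hct,
      lintegral_const_mul' _ _ (by finiteness), lintegral_const_mul _ (
        Measurable.lintegral_prod_right' (f := fun p : Cyl d × Cyl d => ‖f (p.1 + p.2)‖ₑ)
          (by fun_prop)), hsum]
    gcongr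
  have hc2 : c ^ 2 ≠ 0 := pow_ne_zero 2 hc0
  have hc2t : c ^ 2 ≠ ⊤ := by finiteness
  rw [← ENNReal.mul_le_mul_iff_right hc2 hc2t]
  refine hmain.trans_eq ?_
  rw [mul_add, ENNReal.div_eq_inv_mul]
  congr 1
  · ring
  · have : c ^ 2 * (c⁻¹ * (2 * B ^ 2)) = (c * c⁻¹) * c * (2 * B ^ 2) := by ring
    rw [this, ENNReal.mul_inv_cancel hc0 hct]
    ring

/-- Optimization of the one-scale estimate, with `A = ‖∇f‖₂`, `B = ‖f‖₁` and `F = ‖f‖₂²`.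
If `A ≤ B` the balancing scale is `r = (B/A)^(2/3) ≥ 1` with `h = 1`, where the box grows like an
interval; if `B ≤ A` it is `r = h = (B/A)^(2/(d+3)) ≤ 1`, where the box is a `(d+1)`-dimensional
cube. -/
theorem le_of_forall_scale (d : ℕ) {F A B : ℝ} (hA : 0 ≤ A) (hB : 0 ≤ B)
    (hscale : ∀ r h : ℝ, 0 < h → h ≤ r → h ≤ 1 →
      F ≤ 2 * ((d + 1) * r) ^ 2 * A ^ 2 + 2 * B ^ 2 / (r * h ^ d)) :
    F ^ ((1:ℝ)/2) ≤ (2 * (d + 1)) * (A ^ ((1:ℝ)/3) * B ^ ((2:ℝ)/3) +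
      A ^ (((d:ℝ)+1)/((d:ℝ)+3)) * B ^ ((2:ℝ)/((d:ℝ)+3))) := by
  have hd : (0:ℝ) ≤ d := Nat.cast_nonneg d
  have hzero : F ≤ 0 → F ^ ((1:ℝ)/2) ≤ (2 * (d + 1)) * (A ^ ((1:ℝ)/3) * B ^ ((2:ℝ)/3) +
      A ^ (((d:ℝ)+1)/((d:ℝ)+3)) * B ^ ((2:ℝ)/((d:ℝ)+3))) := fun hF => by
    rw [← Real.sqrt_eq_rpow, Real.sqrt_eq_zero_of_nonpos hF]
    positivity
  rcases hA.eq_or_lt with rfl | hA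
  -- let the scale tend to infinity
  · refine hzero (le_of_forall_pos_le_add fun ε hε => ?_)
    have hr : 0 < 1 + 2 * B ^ 2 / ε := by positivity
    have h := hscale (1 + 2 * B ^ 2 / ε) 1 one_pos
      (by linarith [show 0 ≤ 2 * B ^ 2 / ε by positivity]) le_rfl
    refine h.trans ?_
    rw [one_pow, mul_one]
    have : 2 * B ^ 2 / (1 + 2 * B ^ 2 / ε) ≤ ε := by
      rw [div_le_iff₀ hr, mul_add, mul_div_cancel₀ _ hε.ne']
      linarith
    simpa using this
  rcases hB.eq_or_lt with rfl | hB
  -- let the scale tend to zero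
  · refine hzero (le_of_forall_pos_le_add fun ε hε => ?_)
    set M := 2 * ((d:ℝ) + 1) ^ 2 * A ^ 2 with hM
    have hM0 : 0 < M := by positivity
    set r := min 1 (ε / M) with hr
    have hr0 : 0 < r := by positivity
    have h := hscale r r hr0 le_rfl (min_le_left _ _)
    have h1 : M * r ≤ ε := by
      rw [mul_comm, ← le_div_iff₀ hM0]; exact min_le_right _ _
    have h2 : M * r ^ 2 ≤ M * r := by
      have : r ^ 2 ≤ r := by nlinarith [min_le_left 1 (ε / M)]
      gcongr
    have h3 : 2 * (((d:ℝ) + 1) * r) ^ 2 * A ^ 2 = M * r ^ 2 := by rw [hM]; ring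
    rw [h3] at h
    norm_num at h
    linarith
  -- balancing the two terms at a scale with `r ^ (m + 2) = (B / A) ^ 2`
  have key : ∀ m : ℝ, 0 < m → ∀ h, 0 < h → h ≤ (B / A) ^ (2 / (m + 2)) → h ≤ 1 →
      (B / A) ^ (2 / (m + 2)) * h ^ d = ((B / A) ^ (2 / (m + 2))) ^ m →
      F ^ ((1:ℝ)/2) ≤ (2 * (d + 1)) * (A ^ (m / (m + 2)) * B ^ (2 / (m + 2))) := by
    intro m hm h h0 hhr hh1 heq
    have hs := hscale _ h h0 hhr hh1
    rw [heq] at hs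
    set r := (B / A) ^ (2 / (m + 2)) with hr
    have hBA : 0 < B / A := div_pos hB hA
    have hr0 : 0 < r := Real.rpow_pos_of_pos hBA _
    have hrA : r * A = A ^ (m / (m + 2)) * B ^ (2 / (m + 2)) := by
      rw [hr, Real.div_rpow hB.le hA.le]
      have : A ^ (m / (m + 2)) * A ^ (2 / (m + 2)) = A := by
        rw [← Real.rpow_add hA, ← add_div, div_self (by positivity), Real.rpow_one]
      field_simp
      linarith [this]
    have hbal : B ^ 2 / r ^ m = (r * A) ^ 2 := by
      have : r ^ m * r ^ 2 = (B / A) ^ 2 := by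
        rw [← Real.rpow_two, ← Real.rpow_add hr0, hr, ← Real.rpow_mul hBA.le,
          div_mul_cancel₀ _ (by positivity), Real.rpow_two]
      rw [div_eq_iff (by positivity), mul_pow, mul_comm, ← mul_assoc, this]
      field_simp
    rw [← hrA, ← Real.sqrt_eq_rpow, Real.sqrt_le_iff]
    refine ⟨by positivity, hs.trans ?_⟩
    rw [mul_div_assoc, hbal]
    nlinarith [mul_nonneg hd (sq_nonneg (r * A)), mul_nonneg (sq_nonneg (d:ℝ)) (sq_nonneg (r * A))]
  have hC : (0:ℝ) ≤ 2 * (d + 1) := by positivity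
  rcases le_total A B with hAB | hAB
  · have h1 : 1 ≤ B / A := (one_le_div hA).2 hAB
    have h2 : (1:ℝ) ≤ (B / A) ^ ((2:ℝ) / (1 + 2)) := Real.one_le_rpow h1 (by norm_num)
    have := key 1 one_pos 1 one_pos h2 le_rfl (by simp)
    norm_num at this ⊢
    refine this.trans (mul_le_mul_of_nonneg_left (le_add_of_nonneg_right (by positivity)) hC)
  · have h1 : B / A ≤ 1 := (div_le_one hA).2 hAB
    have hBA : 0 < B / A := div_pos hB hA
    have h2 : (B / A) ^ ((2:ℝ) / (d + 1 + 2)) ≤ 1 :=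
      Real.rpow_le_one hBA.le h1 (by positivity)
    have := key (d + 1) (by positivity) _ (Real.rpow_pos_of_pos hBA _) le_rfl h2
      (by rw [mul_comm, ← pow_succ, ← Real.rpow_natCast _ (d + 1)]; push_cast; rfl)
    rw [show (d:ℝ) + 1 + 2 = d + 3 by ring] at this
    refine this.trans (mul_le_mul_of_nonneg_left (le_add_of_nonneg_left (by positivity)) hC)



/-- The interpolation inequality on `ℝ × 𝕋^d`, with constant `2 (d + 1)`. Only the terms `k = 0`
and `k = d` of the sum are needed. -/
theorem cylinder_inequality {d : ℕ} (hd : 1 ≤ d) {f : Cyl d → ℝ} (hf : Differentiable ℝ f)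
    (hper : ∀ (p : Cyl d) (m : Fin d → ℤ), f (p + (0, WithLp.toLp 2 fun i => (m i : ℝ))) = f p)
    (hint : IntegrableOn f (cell d 0))
    (hgrad : IntegrableOn (fun p => ‖fderiv ℝ f p‖ ^ 2) (cell d 0)) :
    (∫ p in cell d 0, f p ^ 2) ^ ((1:ℝ)/2) ≤ (2 * ((d:ℝ) + 1)) * ∑ k ∈ Finset.range (d + 1),
      ((∫ p in cell d 0, ‖fderiv ℝ f p‖ ^ 2) ^ ((1:ℝ)/2)) ^ (((k:ℝ)+1)/((k:ℝ)+3)) *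
        (∫ p in cell d 0, |f p|) ^ (1 - ((k:ℝ)+1)/((k:ℝ)+3)) := by
  have hB : ∫⁻ x in cell d 0, ‖f x‖ₑ = ENNReal.ofReal (∫ x in cell d 0, |f x|) := by
    rw [ofReal_integral_eq_lintegral_ofReal hint.abs (ae_of_all _ fun _ => abs_nonneg _)]
    simp only [Real.enorm_eq_ofReal_abs]
  have hA : ∫⁻ x in cell d 0, ‖fderiv ℝ f x‖ₑ ^ 2 =
      ENNReal.ofReal (∫ x in cell d 0, ‖fderiv ℝ f x‖ ^ 2) := by
    rw [ofReal_integral_eq_lintegral_ofReal hgrad (ae_of_all _ fun _ => by positivity)]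
    simp only [← ofReal_norm, ENNReal.ofReal_pow (norm_nonneg _)]
  have hF : ∫ x in cell d 0, f x ^ 2 = (∫⁻ x in cell d 0, ‖f x‖ₑ ^ 2).toReal := by
    rw [integral_eq_lintegral_of_nonneg_ae (ae_of_all _ fun _ => sq_nonneg _)
      (hf.continuous.pow 2).aestronglyMeasurable]
    simp only [Real.enorm_eq_ofReal_abs, ← ENNReal.ofReal_pow (abs_nonneg _), sq_abs]
  have hA0 : 0 ≤ ∫ x in cell d 0, ‖fderiv ℝ f x‖ ^ 2 := integral_nonneg fun _ => by positivity
  have hB0 : 0 ≤ ∫ x in cell d 0, |f x| := integral_nonneg fun _ => abs_nonneg _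
  set A2 := ∫ x in cell d 0, ‖fderiv ℝ f x‖ ^ 2 with hA2
  set B := ∫ x in cell d 0, |f x| with hBdef
  have hAsq : (A2 ^ ((1:ℝ)/2)) ^ 2 = A2 := by
    rw [← Real.sqrt_eq_rpow, Real.sq_sqrt hA0]
  refine (le_of_forall_scale d (A := A2 ^ ((1:ℝ)/2)) (B := B) (by positivity) hB0
    fun r h hh hhr hh1 => ?_).trans ?_
  · have hr : 0 < r := hh.trans_le hhr
    have hs := lintegral_sq_le_of_scale hf hper hh hhr hh1
    rw [hF]
    generalize ∫⁻ x in cell d 0, ‖f x‖ₑ ^ 2 = Fe at hs ⊢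
    rw [hA, hB, ← ENNReal.ofReal_pow hB0, ← ENNReal.ofReal_pow (by positivity),
      show (2 : ℝ≥0∞) = ENNReal.ofReal 2 by simp, ← ENNReal.ofReal_mul (by norm_num),
      ← ENNReal.ofReal_mul (by positivity), ← ENNReal.ofReal_mul (by norm_num),
      ← ENNReal.ofReal_div_of_pos (by positivity),
      ← ENNReal.ofReal_add (by positivity) (by positivity)] at hs
    rw [hAsq]
    exact ENNReal.toReal_le_of_le_ofReal (by positivity) hs
  · gcongr
    set g : ℕ → ℝ := fun k => (A2 ^ ((1:ℝ)/2)) ^ (((k:ℝ)+1)/((k:ℝ)+3)) *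
      B ^ (1 - ((k:ℝ)+1)/((k:ℝ)+3)) with hg
    have hg0 : ∀ k, 0 ≤ g k := fun k => by positivity
    have hexp : ∀ k : ℕ, 1 - ((k:ℝ)+1)/((k:ℝ)+3) = 2/((k:ℝ)+3) := fun k => by
      field_simp; ring
    calc _ = g 0 + g d := by
          simp only [hg, hexp]
          norm_num
      _ = ∑ k ∈ {0, d}, g k := (Finset.sum_pair (by omega)).symm
      _ ≤ ∑ k ∈ Finset.range (d + 1), g k :=
          Finset.sum_le_sum_of_subset_of_nonneg (by intro k hk; simp at hk ⊢; omega)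
            fun k _ _ => hg0 k

/-- Gagliardo–Nirenberg type interpolation inequality on the cylinder
`Ω = ℝ × 𝕋^{n-1}`, where the torus is modeled by functions on
`ℝ × ℝ^{n-1}` that are `ℤ^{n-1}`-periodic in the second factor, and integrals
are taken over a fundamental domain `D = ℝ × [0,1)^{n-1}`. -/
theorem gagliardo_nirenberg_cylinder (n : ℕ) (hn : 2 ≤ n) :
    ∃ C > (0:ℝ), ∀ f : ℝ × EuclideanSpace ℝ (Fin (n-1)) → ℝ,
      Differentiable ℝ f →
      (∀ (p : ℝ × EuclideanSpace ℝ (Fin (n-1))) (m : Fin (n-1) → ℤ),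
        f (p.1, p.2 + (WithLp.equiv 2 (Fin (n-1) → ℝ)).symm (fun i => (m i : ℝ))) = f p) →
      IntegrableOn f {p : ℝ × EuclideanSpace ℝ (Fin (n-1)) | ∀ i, p.2 i ∈ Set.Ico (0:ℝ) 1} →
      IntegrableOn (fun p => ‖fderiv ℝ f p‖ ^ 2)
        {p : ℝ × EuclideanSpace ℝ (Fin (n-1)) | ∀ i, p.2 i ∈ Set.Ico (0:ℝ) 1} →
      (∫ p in {p : ℝ × EuclideanSpace ℝ (Fin (n-1)) | ∀ i, p.2 i ∈ Set.Ico (0:ℝ) 1},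
          (f p) ^ 2) ^ ((1:ℝ)/2)
        ≤ C * ∑ k ∈ Finset.range n,
            ((∫ p in {p : ℝ × EuclideanSpace ℝ (Fin (n-1)) | ∀ i, p.2 i ∈ Set.Ico (0:ℝ) 1},
                ‖fderiv ℝ f p‖ ^ 2) ^ ((1:ℝ)/2)) ^ (((k:ℝ)+1)/((k:ℝ)+3))
            * (∫ p in {p : ℝ × EuclideanSpace ℝ (Fin (n-1)) | ∀ i, p.2 i ∈ Set.Ico (0:ℝ) 1},
                |f p|) ^ (1 - ((k:ℝ)+1)/((k:ℝ)+3)) := by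
  obtain ⟨d, rfl⟩ : ∃ d, n = d + 1 := ⟨n - 1, by omega⟩
  refine ⟨2 * (d + 1), by positivity, fun f hf hper hint hgrad => ?_⟩
  have hcell : {p : ℝ × EuclideanSpace ℝ (Fin (d + 1 - 1)) | ∀ i, p.2 i ∈ Set.Ico (0:ℝ) 1} =
      cell d 0 := by
    ext p; simp [cell]
  rw [hcell] at hint hgrad ⊢
  refine cylinder_inequality (d := d) (by omega) hf (fun p m => ?_) hint hgrad
  rw [← hper p m]
  congr 1
  exact Prod.ext (add_zero _) rfl
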